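/- The map Φ sending (τ, u, v, w) ∈ H_d × M_{1,d}(ℂ) × M_{d,1}(ℂ) × ℂ to the column span of the (2d+2)×(d+1) block matrix with block rows (u, w), (τ, v), (1_d, 0), (0, 1) is injective, and its image is exactly the set of ℂ-subspaces F ⊆ ℂ^{2d+2} satisfying: (i) F ∩ ℂ·e₀ = {0}; (ii) F + W = ℂ^{2d+2}; (iii) the image of F ∩ W under π belongs to D_Ψ. (This is Proposition 4.1 of the paper, parametrising the set D of mixed Hodge structures by H_d × M_{1,d}(ℂ) × M_{d,1}(ℂ) × ℂ.) -/

import Mathlib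

open Matrix Complex

noncomputable section

/-- `ℂ^{2d}`. -/
abbrev Vd (d : ℕ) := (Fin d ⊕ Fin d) → ℂ

/-- Index set for `ℂ^{2d+2}`: the coordinate `e₀` is `Sum.inl ()`, the middle `2d`
coordinates are the `Sum.inr (Sum.inl _)` ones, and `e_{2d+1}` is `Sum.inr (Sum.inr ())`. -/
abbrev Idx (d : ℕ) := Unit ⊕ ((Fin d ⊕ Fin d) ⊕ Unit)

/-- `ℂ^{2d+2}`. -/
abbrev V2 (d : ℕ) := Idx d → ℂ

/-- The matrix `J = [[0, -1_d],[1_d, 0]]`. -/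
def Jmat (d : ℕ) : Matrix (Fin d ⊕ Fin d) (Fin d ⊕ Fin d) ℝ :=
  Matrix.fromBlocks 0 (-1) 1 0

/-- The bilinear form `ω(x,y) = xᵀ · J · y` on `ℂ^{2d}`. -/
def omegaC (d : ℕ) (x y : Vd d) : ℂ :=
  x ⬝ᵥ (((Jmat d).map (fun r : ℝ => (r : ℂ))) *ᵥ y)

/-- The set `D_Ψ`. -/
def DPsi (d : ℕ) : Set (Submodule ℂ (Vd d)) :=
  {F | Module.finrank ℂ F = d ∧
       (∀ x ∈ F, ∀ y ∈ F, omegaC d x y = 0) ∧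
       (∀ v ∈ F, v ≠ 0 →
         ∃ r : ℝ, 0 < r ∧
           Complex.I * omegaC d v (fun i => (starRingEnd ℂ) (v i)) = (r : ℂ))}

/-- The Siegel half space `H_d`. -/
def Siegel (d : ℕ) : Set (Matrix (Fin d) (Fin d) ℂ) :=
  {τ | τᵀ = τ ∧ (τ.map Complex.im).PosDef}

/-- The standard basis vector `e₀` of `ℂ^{2d+2}`. -/
def e0 (d : ℕ) : V2 d := fun i => if i = Sum.inl () then 1 else 0

/-- The subspace `W ⊆ ℂ^{2d+2}` spanned by `e₀, …, e_{2d}`, i.e. where the last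
coordinate vanishes. -/
def Wsub (d : ℕ) : Submodule ℂ (V2 d) :=
  LinearMap.ker (LinearMap.proj (Sum.inr (Sum.inr ())) : V2 d →ₗ[ℂ] ℂ)

/-- The projection `π : ℂ^{2d+2} → ℂ^{2d}` forgetting the `e₀`-coordinate (and the
last coordinate); on `W` it is the projection of the statement. -/
def projW (d : ℕ) : V2 d →ₗ[ℂ] Vd d :=
  LinearMap.funLeft ℂ ℂ (fun j => Sum.inr (Sum.inl j))

/-- The `(2d+2) × (d+1)` block matrix with block rows `(u, w)`, `(τ, v)`, `(1_d, 0)`,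
`(0, 1)`. -/
def colMat (d : ℕ) (τ : Matrix (Fin d) (Fin d) ℂ) (u : Fin d → ℂ) (v : Fin d → ℂ)
    (w : ℂ) : Matrix (Idx d) (Fin d ⊕ Unit) ℂ :=
  Matrix.of fun i k =>
    match i, k with
    | Sum.inl _, Sum.inl j => u j
    | Sum.inl _, Sum.inr _ => w
    | Sum.inr (Sum.inl (Sum.inl i)), Sum.inl j => τ i j
    | Sum.inr (Sum.inl (Sum.inl i)), Sum.inr _ => v i
    | Sum.inr (Sum.inl (Sum.inr i)), Sum.inl j => if i = j then 1 else 0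
    | Sum.inr (Sum.inl (Sum.inr _)), Sum.inr _ => 0
    | Sum.inr (Sum.inr _), Sum.inl _ => 0
    | Sum.inr (Sum.inr _), Sum.inr _ => 1

/-- `Φ(τ,u,v,w)`: the column span of the above block matrix. -/
def Phi (d : ℕ) (τ : Matrix (Fin d) (Fin d) ℂ) (u : Fin d → ℂ) (v : Fin d → ℂ)
    (w : ℂ) : Submodule ℂ (V2 d) :=
  LinearMap.range (colMat d τ u v w).mulVecLin

lemma aux_omega (d : ℕ) (x y : Vd d) :
    omegaC d x y = ∑ i, (x (Sum.inr i) * y (Sum.inl i) - x (Sum.inl i) * y (Sum.inr i)) := by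
  have h1 : (Jmat d).map (fun r : ℝ => (r : ℂ)) = Matrix.fromBlocks 0 (-1) 1 0 := by
    unfold Jmat
    ext i j
    rcases i with i | i <;> rcases j with j | j <;>
      simp [Matrix.one_apply, apply_ite]
  unfold omegaC
  rw [h1]
  simp only [dotProduct, Matrix.fromBlocks_mulVec, Fintype.sum_sum_type, Sum.elim_inl,
    Sum.elim_inr, Finset.sum_sub_distrib]
  simp [Matrix.neg_mulVec, Function.comp_def]
  ring

lemma aux_mem (d : ℕ) (τ : Matrix (Fin d) (Fin d) ℂ) (u v : Fin d → ℂ) (w : ℂ) (f : V2 d) :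
    f ∈ Phi d τ u v w ↔
      f (Sum.inl ()) = ∑ j, u j * f (Sum.inr (Sum.inl (Sum.inr j)))
          + w * f (Sum.inr (Sum.inr ())) ∧
      ∀ i, f (Sum.inr (Sum.inl (Sum.inl i))) =
        ∑ j, τ i j * f (Sum.inr (Sum.inl (Sum.inr j))) + v i * f (Sum.inr (Sum.inr ())) := by
  unfold Phi
  rw [LinearMap.mem_range]
  constructor
  · rintro ⟨a, rfl⟩
    simp [colMat, Matrix.mulVec, dotProduct]
  · rintro ⟨h1, h2⟩
    refine ⟨Sum.elim (fun j => f (Sum.inr (Sum.inl (Sum.inr j))))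
      (fun _ => f (Sum.inr (Sum.inr ()))), ?_⟩
    funext i
    rcases i with _ | (i | i) | _
    · simp [colMat, Matrix.mulVec, dotProduct, h1]
    · simp [colMat, Matrix.mulVec, dotProduct, h2]
    · simp [colMat, Matrix.mulVec, dotProduct]
    · simp [colMat, Matrix.mulVec, dotProduct]

/-- the vector of the graph -/
def auxVec (d : ℕ) (c : ℂ) (x a : Fin d → ℂ) (b : ℂ) : V2 d :=
  Sum.elim (fun _ => c) (Sum.elim (Sum.elim x a) (fun _ => b))

lemma aux_vec_mem (d : ℕ) (τ : Matrix (Fin d) (Fin d) ℂ) (u v : Fin d → ℂ) (w : ℂ)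
    (c : ℂ) (x a : Fin d → ℂ) (b : ℂ) :
    auxVec d c x a b ∈ Phi d τ u v w ↔
      c = ∑ j, u j * a j + w * b ∧ ∀ i, x i = ∑ j, τ i j * a j + v i * b := by
  rw [aux_mem]; simp [auxVec]

lemma aux_inj (d : ℕ) (τ : Matrix (Fin d) (Fin d) ℂ) (u v : Fin d → ℂ) (w : ℂ)
    (τ' : Matrix (Fin d) (Fin d) ℂ) (u' v' : Fin d → ℂ) (w' : ℂ)
    (h : Phi d τ u v w = Phi d τ' u' v' w') : τ = τ' ∧ u = u' ∧ v = v' ∧ w = w' := by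
  have key : ∀ (a : Fin d → ℂ) (b : ℂ),
      (∑ j, u j * a j + w * b = ∑ j, u' j * a j + w' * b) ∧
      ∀ i, ∑ j, τ i j * a j + v i * b = ∑ j, τ' i j * a j + v' i * b := by
    intro a b
    have := (aux_vec_mem d τ u v w (∑ j, u j * a j + w * b)
      (fun i => ∑ j, τ i j * a j + v i * b) a b).2 ⟨rfl, fun _ => rfl⟩
    rw [h, aux_vec_mem] at this
    exact this
  have k1 := key 0 1
  simp at k1
  have k2 := fun j => key (Pi.single j 1) 0
  simp [Pi.single_apply] at k2
  refine ⟨?_, ?_, ?_, k1.1⟩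
  · ext i j; exact (k2 j).2 i
  · funext j; exact (k2 j).1
  · funext i; exact k1.2 i

lemma aux_map (d : ℕ) (τ : Matrix (Fin d) (Fin d) ℂ) (u v : Fin d → ℂ) (w : ℂ) (g : Vd d) :
    g ∈ Submodule.map (projW d) (Phi d τ u v w ⊓ Wsub d) ↔
      ∀ i, g (Sum.inl i) = ∑ j, τ i j * g (Sum.inr j) := by
  rw [Submodule.mem_map]
  constructor
  · rintro ⟨f, ⟨hf, hW⟩, rfl⟩ i
    have hW' : f (Sum.inr (Sum.inr ())) = 0 := hW
    have := ((aux_mem d τ u v w f).1 hf).2 i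
    rw [hW'] at this
    simpa [projW, LinearMap.funLeft_apply] using this
  · intro h
    refine ⟨auxVec d (∑ j, u j * g (Sum.inr j)) (fun i => g (Sum.inl i))
      (fun i => g (Sum.inr i)) 0, ⟨?_, ?_⟩, ?_⟩
    · refine (aux_vec_mem ..).2 ⟨by simp, fun i => by simp [h]⟩
    · simp [Wsub, auxVec]
    · funext i
      rcases i with i | i <;> simp [projW, LinearMap.funLeft_apply, auxVec]

lemma aux_herm (d : ℕ) (τ : Matrix (Fin d) (Fin d) ℂ) (hτ : τᵀ = τ) (g : Vd d)
    (hg : ∀ i, g (Sum.inl i) = ∑ j, τ i j * g (Sum.inr j)) :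
    Complex.I * omegaC d g (fun i => (starRingEnd ℂ) (g i)) =
      ((2 * ((fun i => (g (Sum.inr i)).re) ⬝ᵥ (τ.map Complex.im *ᵥ fun i => (g (Sum.inr i)).re)
        + (fun i => (g (Sum.inr i)).im) ⬝ᵥ (τ.map Complex.im *ᵥ fun i => (g (Sum.inr i)).im)) :
          ℝ) : ℂ) := by
  have hs : ∀ i j, τ i j = τ j i := fun i j => by
    conv_lhs => rw [← hτ]
    rfl
  rw [aux_omega]
  simp only [hg, map_sum, map_mul, Finset.sum_sub_distrib, Finset.mul_sum, Finset.sum_mul]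
  have e1 : ∑ i, ∑ j, g (Sum.inr i) * ((starRingEnd ℂ) (τ i j) * (starRingEnd ℂ) (g (Sum.inr j)))
      = ∑ i, ∑ j, g (Sum.inr j) * ((starRingEnd ℂ) (τ i j) * (starRingEnd ℂ) (g (Sum.inr i))) := by
    rw [Finset.sum_comm]
    refine Finset.sum_congr rfl fun i _ => Finset.sum_congr rfl fun j _ => ?_
    rw [hs i j]
  rw [e1, ← Finset.sum_sub_distrib]
  simp only [← Finset.sum_sub_distrib]
  have e2 : ∑ i, ∑ j, (τ i j).im * ((g (Sum.inr j)).im * (g (Sum.inr i)).re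
      - (g (Sum.inr j)).re * (g (Sum.inr i)).im) = 0 := by
    have : ∑ i, ∑ j, (τ i j).im * ((g (Sum.inr j)).im * (g (Sum.inr i)).re
      - (g (Sum.inr j)).re * (g (Sum.inr i)).im) = - ∑ i, ∑ j, (τ i j).im * ((g (Sum.inr j)).im * (g (Sum.inr i)).re
      - (g (Sum.inr j)).re * (g (Sum.inr i)).im) := by
      conv_lhs => rw [Finset.sum_comm]
      simp only [← Finset.sum_neg_distrib]
      refine Finset.sum_congr rfl fun i _ => Finset.sum_congr rfl fun j _ => ?_
      rw [hs i j]; ring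
    linarith
  have e3 : ∀ i j, g (Sum.inr j) * ((starRingEnd ℂ) (τ i j) * (starRingEnd ℂ) (g (Sum.inr i)))
      - τ i j * g (Sum.inr j) * (starRingEnd ℂ) (g (Sum.inr i)) =
      -Complex.I * ((2 * ((g (Sum.inr i)).re * ((τ i j).im * (g (Sum.inr j)).re) +
        (g (Sum.inr i)).im * ((τ i j).im * (g (Sum.inr j)).im)) : ℝ) : ℂ)
      + ((2 * ((τ i j).im * ((g (Sum.inr j)).im * (g (Sum.inr i)).re
      - (g (Sum.inr j)).re * (g (Sum.inr i)).im)) : ℝ) : ℂ) := by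
    intro i j
    apply Complex.ext <;> simp <;> ring
  simp only [e3, Finset.sum_add_distrib, ← Finset.mul_sum, ← Complex.ofReal_sum]
  rw [e2]
  simp only [Matrix.mulVec, dotProduct, Matrix.map_apply, Finset.mul_sum]
  simp only [mul_zero, Complex.ofReal_zero, add_zero]
  rw [← mul_assoc]
  simp

lemma aux_fwd (d : ℕ) (τ : Matrix (Fin d) (Fin d) ℂ) (hτ : τ ∈ Siegel d)
    (u v : Fin d → ℂ) (w : ℂ) :
    Phi d τ u v w ⊓ Submodule.span ℂ {e0 d} = ⊥ ∧ Phi d τ u v w ⊔ Wsub d = ⊤ ∧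
      Submodule.map (projW d) (Phi d τ u v w ⊓ Wsub d) ∈ DPsi d := by
  obtain ⟨hs, hp⟩ := hτ
  refine ⟨?_, ?_, ?_, ?_, ?_⟩
  · rw [eq_bot_iff]
    rintro f ⟨hf, hf2⟩
    obtain ⟨c, rfl⟩ := Submodule.mem_span_singleton.1 hf2
    have := ((aux_mem ..).1 hf).1
    simp [e0] at this
    simp [this]
  · rw [eq_top_iff]
    intro f _
    have h1 : auxVec d (w * f (Sum.inr (Sum.inr ()))) (fun i => v i * f (Sum.inr (Sum.inr ()))) 0
        (f (Sum.inr (Sum.inr ()))) ∈ Phi d τ u v w := by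
      rw [aux_vec_mem]; simp
    rw [Submodule.mem_sup]
    refine ⟨_, h1, f - _, ?_, add_sub_cancel _ _⟩
    change (f - _ : V2 d) _ = _
    simp [auxVec]
  · let L : (Fin d → ℂ) →ₗ[ℂ] Vd d :=
      { toFun := fun a => Sum.elim (τ *ᵥ a) a
        map_add' := by
          intro a b; funext i
          rcases i with i | i <;> simp [Matrix.mulVec_add]
        map_smul' := by
          intro a b; funext i
          rcases i with i | i <;> simp [Matrix.mulVec_smul] }
    have hL : Function.Injective L := by
      intro a b h
      funext i
      exact congrFun h (Sum.inr i)
    have : Submodule.map (projW d) (Phi d τ u v w ⊓ Wsub d) = LinearMap.range L := by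
      ext g
      rw [aux_map, LinearMap.mem_range]
      constructor
      · intro h
        refine ⟨fun i => g (Sum.inr i), ?_⟩
        funext i
        rcases i with i | i
        · simp [L, h, Matrix.mulVec, dotProduct]
        · simp [L]
      · rintro ⟨a, rfl⟩ i
        simp [L, Matrix.mulVec, dotProduct]
    rw [this, LinearMap.finrank_range_of_inj hL]
    simp
  · intro x hx y hy
    rw [aux_map] at hx hy
    have hs' : ∀ i j, τ i j = τ j i := fun i j => by
      conv_lhs => rw [← hs]
      rfl
    rw [aux_omega]
    simp only [hx, hy, Finset.sum_sub_distrib, Finset.mul_sum, Finset.sum_mul]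
    rw [sub_eq_zero, Finset.sum_comm]
    refine Finset.sum_congr rfl fun i _ => Finset.sum_congr rfl fun j _ => ?_
    rw [hs' i j]; ring
  · intro g hg hg0
    rw [aux_map] at hg
    refine ⟨_, ?_, aux_herm d τ hs g hg⟩
    have nn : ∀ x : Fin d → ℝ, 0 ≤ x ⬝ᵥ (τ.map Complex.im *ᵥ x) := fun x => by
      simpa using hp.posSemidef.dotProduct_mulVec_nonneg x
    have pp : ∀ x : Fin d → ℝ, x ≠ 0 → 0 < x ⬝ᵥ (τ.map Complex.im *ᵥ x) := fun x hx => by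
      simpa using hp.dotProduct_mulVec_pos hx
    by_cases h1 : (fun i => (g (Sum.inr i)).re) = 0
    · by_cases h2 : (fun i => (g (Sum.inr i)).im) = 0
      · exfalso
        apply hg0
        have h3 : ∀ i, g (Sum.inr i) = 0 := fun i =>
          Complex.ext (congrFun h1 i) (congrFun h2 i)
        funext i
        rcases i with i | i
        · simp [hg, h3]
        · simp [h3]
      · have := pp _ h2
        have := nn (fun i => (g (Sum.inr i)).re)
        linarith
    · have := pp _ h1
      have := nn (fun i => (g (Sum.inr i)).im)
      linarith

lemma aux_bwd (d : ℕ) (F : Submodule ℂ (V2 d)) (h1 : F ⊓ Submodule.span ℂ {e0 d} = ⊥)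
    (h2 : F ⊔ Wsub d = ⊤) (h3 : Submodule.map (projW d) (F ⊓ Wsub d) ∈ DPsi d) :
    ∃ τ ∈ Siegel d, ∃ u v w, Phi d τ u v w = F := by
  obtain ⟨hr, hi, hp⟩ := h3
  set G := Submodule.map (projW d) (F ⊓ Wsub d) with hG
  have hz : ∀ g ∈ G, (∀ i, g (Sum.inr i) = 0) → g = 0 := by
    intro g hg h
    by_contra h0
    obtain ⟨r, hr, he⟩ := hp g hg h0
    rw [aux_omega] at he
    simp [h] at he
    exact hr.ne (by exact_mod_cast he)
  let P : G →ₗ[ℂ] (Fin d → ℂ) := (LinearMap.funLeft ℂ ℂ Sum.inr) ∘ₗ G.subtype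
  have hPi : Function.Injective P := by
    rw [← LinearMap.ker_eq_bot, eq_bot_iff]
    intro g hg
    rw [LinearMap.mem_ker] at hg
    have := hz g g.2 (fun i => congrFun hg i)
    simpa using this
  have hPs : Function.Surjective P :=
    (LinearMap.injective_iff_surjective_of_finrank_eq_finrank (by simp [hr])).1 hPi
  -- lifts
  have hlift : ∀ a : Fin d → ℂ, ∃ c x, auxVec d c x a 0 ∈ F ∧ Sum.elim x a ∈ G := by
    intro a
    obtain ⟨⟨g, hg⟩, hga⟩ := hPs a
    have hga' : ∀ i, g (Sum.inr i) = a i := fun i => congrFun hga i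
    obtain ⟨f, ⟨hf, hW⟩, rfl⟩ := id hg
    have hW' : f (Sum.inr (Sum.inr ())) = 0 := hW
    refine ⟨f (Sum.inl ()), fun i => f (Sum.inr (Sum.inl (Sum.inl i))), ?_, ?_⟩
    · have hf' : f ∈ F := hf
      convert hf' using 1
      funext i
      rcases i with _ | (i | i) | _
      · simp [auxVec]
      · simp [auxVec]
      · simp [auxVec, ← hga', projW, LinearMap.funLeft_apply]
      · simp [auxVec, hW']
    · convert hg using 1
      funext i
      rcases i with i | i
      · simp [projW, LinearMap.funLeft_apply]
      · simp [← hga']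
  choose c x hF hGm using hlift
  let τ : Matrix (Fin d) (Fin d) ℂ := Matrix.of fun i j => x (Pi.single j 1) i
  let u : Fin d → ℂ := fun j => c (Pi.single j 1)
  have hlast : ∃ f ∈ F, f (Sum.inr (Sum.inr ())) = 1 := by
    have : (auxVec d 0 0 0 1) ∈ F ⊔ Wsub d := h2 ▸ Submodule.mem_top
    obtain ⟨f, hf, g, hg, e⟩ := Submodule.mem_sup.1 this
    refine ⟨f, hf, ?_⟩
    have hg' : g (Sum.inr (Sum.inr ())) = 0 := hg
    have := congrFun e (Sum.inr (Sum.inr ()))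
    simpa [hg', auxVec] using this
  obtain ⟨f0, hf0, hf01⟩ := hlast
  have hlast : ∃ w v, auxVec d w v 0 1 ∈ F := by
    let a : Fin d → ℂ := fun i => f0 (Sum.inr (Sum.inl (Sum.inr i)))
    refine ⟨f0 (Sum.inl ()) - c a, fun i => f0 (Sum.inr (Sum.inl (Sum.inl i))) - x a i, ?_⟩
    convert F.sub_mem hf0 (hF a) using 1
    funext i
    rcases i with _ | (i | i) | _ <;> simp [auxVec, hf01, a]
  obtain ⟨w, v, hwv⟩ := hlast
  have hle : Phi d τ u v w ≤ F := by
    intro f hf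
    obtain ⟨ha, hb⟩ := (aux_mem ..).1 hf
    have : f = ∑ j, f (Sum.inr (Sum.inl (Sum.inr j))) •
        auxVec d (c (Pi.single j 1)) (x (Pi.single j 1)) (Pi.single j 1) 0
        + f (Sum.inr (Sum.inr ())) • auxVec d w v 0 1 := by
      funext i
      rcases i with _ | (i | i) | _
      · simp [auxVec, ha, u, mul_comm]
      · simp [auxVec, hb, τ, mul_comm]
      · simp [auxVec, Pi.single_apply]
      · simp [auxVec]
    rw [this]
    exact F.add_mem (F.sum_mem fun j _ => F.smul_mem _ (hF _)) (F.smul_mem _ hwv)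
  have hEq : Phi d τ u v w = F := by
    refine le_antisymm hle ?_
    intro f hf
    let a : Fin d → ℂ := fun i => f (Sum.inr (Sum.inl (Sum.inr i)))
    let b := f (Sum.inr (Sum.inr ()))
    have hm := (aux_vec_mem d τ u v w (∑ j, u j * a j + w * b)
      (fun i => ∑ j, τ i j * a j + v i * b) a b).2 ⟨rfl, fun _ => rfl⟩
    set k := auxVec d (∑ j, u j * a j + w * b)
      (fun i => ∑ j, τ i j * a j + v i * b) a b with hk
    have hd : f - k ∈ F := F.sub_mem hf (hle hm)
    have hdW : f - k ∈ Wsub d := by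
      change (f - k : V2 d) _ = _
      simp [hk, auxVec, b]
    have hg : projW d (f - k) = 0 := by
      apply hz _ (Submodule.mem_map_of_mem ⟨hd, hdW⟩)
      intro i
      simp [projW, LinearMap.funLeft_apply, hk, auxVec, a]
    have hs : f - k ∈ Submodule.span ℂ {e0 d} := by
      rw [Submodule.mem_span_singleton]
      refine ⟨(f - k) (Sum.inl ()), ?_⟩
      funext i
      rcases i with _ | i | _
      · simp [e0]
      · have := congrFun hg i
        simp only [projW, LinearMap.funLeft_apply, Pi.zero_apply] at this
        rw [this]
        simp [e0]
      · have : (f - k) (Sum.inr (Sum.inr ())) = 0 := hdW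
        rw [this]
        simp [e0]
    have h0 : f - k ∈ (⊥ : Submodule ℂ (V2 d)) := h1 ▸ ⟨hd, hs⟩
    rw [Submodule.mem_bot, sub_eq_zero] at h0
    rw [h0]; exact hm
  have hmem : ∀ g : Vd d, g ∈ G ↔ ∀ i, g (Sum.inl i) = ∑ j, τ i j * g (Sum.inr j) := by
    intro g
    rw [hG, ← hEq, aux_map]
  have hsym : τᵀ = τ := by
    ext i j
    have := hi _ (hGm (Pi.single i 1)) _ (hGm (Pi.single j 1))
    rw [aux_omega] at this
    simp [Pi.single_apply, sub_eq_zero] at this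
    simp [τ, this]
  refine ⟨τ, ⟨hsym, ?_⟩, u, v, w, hEq⟩
  refine Matrix.PosDef.of_dotProduct_mulVec_pos ?_ ?_
  · ext i j
    have := congrFun (congrFun hsym i) j
    simp only [Matrix.transpose_apply] at this
    simp [this]
  · intro y hy
    have hg : ∀ i, (Sum.elim (fun i => ∑ j, τ i j * (y j : ℂ)) (fun i => (y i : ℂ)) : Vd d)
        (Sum.inl i) = ∑ j, τ i j * (Sum.elim (fun i => ∑ j, τ i j * (y j : ℂ))
          (fun i => (y i : ℂ)) : Vd d) (Sum.inr j) := fun i => by simp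
    obtain ⟨r, hr, he⟩ := hp _ ((hmem _).2 hg) (by
      intro h
      apply hy
      funext i
      have := congrFun h (Sum.inr i)
      simpa using this)
    rw [aux_herm d τ hsym _ hg] at he
    have he' := Complex.ofReal_injective he
    simp only [Sum.elim_inr, Complex.ofReal_re, Complex.ofReal_im] at he'
    have hz : (fun _ : Fin d => (0 : ℝ)) = 0 := rfl
    rw [hz, zero_dotProduct, add_zero] at he'
    have : star y = y := by simp
    rw [this]
    change 0 < (fun i => y i) ⬝ᵥ _
    linarith

/-- Proposition 4.1: `Φ` is injective on `H_d × M_{1,d}(ℂ) × M_{d,1}(ℂ) × ℂ`, and its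
image is the set of subspaces `F` with `F ∩ ℂe₀ = 0`, `F + W = ℂ^{2d+2}` and
`π(F ∩ W) ∈ D_Ψ`. -/
theorem phi_injective_image (d : ℕ) (hd : 1 ≤ d) :
    (∀ τ ∈ Siegel d, ∀ (u v : Fin d → ℂ) (w : ℂ), ∀ τ' ∈ Siegel d,
        ∀ (u' v' : Fin d → ℂ) (w' : ℂ),
        Phi d τ u v w = Phi d τ' u' v' w' → τ = τ' ∧ u = u' ∧ v = v' ∧ w = w') ∧
    (∀ F : Submodule ℂ (V2 d),
        (F ⊓ Submodule.span ℂ {e0 d} = ⊥ ∧ F ⊔ Wsub d = ⊤ ∧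
          Submodule.map (projW d) (F ⊓ Wsub d) ∈ DPsi d) ↔
        ∃ τ ∈ Siegel d, ∃ u v w, Phi d τ u v w = F) := by

  refine ⟨fun τ _ u v w τ' _ u' v' w' h => aux_inj d τ u v w τ' u' v' w' h, fun F => ⟨?_, ?_⟩⟩
  · rintro ⟨h1, h2, h3⟩
    exact aux_bwd d F h1 h2 h3
  · rintro ⟨τ, hτ, u, v, w, rfl⟩
    exact aux_fwd d τ hτ u v w
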